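/- arXiv:gr-qc/0010008 — 4 statements merged into one kernel-verified Lean document; each statement's English description precedes it below -/
import Mathlib

section
/- For each fixed even integer m ≥ 2, the limit as N → ∞ along even integers of C₀(N,m+2)/C₀(N,m) exists and equals 6 · (1 − 1/(4m²))/(1 − 1/m) = (3/2)·(4m²−1)/(m(m−1)). -/
open Filter Real MeasureTheory

/-- Number of rooted quasitriangulations of a sphere with a hole with `N` triangles and
`m` boundary edges (Goulden–Jackson), with `j = (N - m)/2`. -/
noncomputable def C0 (N m : ℕ) : ℝ :=
  (2 : ℝ) ^ ((N - m) / 2 + 2) * (Nat.factorial (2 * m + 3 * ((N - m) / 2) - 1) : ℝ) *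
    (Nat.factorial (2 * m - 3) : ℝ) /
    ((Nat.factorial ((N - m) / 2 + 1) : ℝ) * (Nat.factorial (2 * m + 2 * ((N - m) / 2)) : ℝ) *
      ((Nat.factorial (m - 2) : ℝ)) ^ 2)

/-- The filter "N → ∞ along even integers". -/
def evenAtTop : Filter ℕ := Filter.atTop ⊓ Filter.principal {N | Even N}

/-!
At fixed `N` the substitution `m ↦ m + 2` lowers `(N - m) / 2` by one, from `j + 1` to `j` say. This
shifts each factorial in `C0` by a bounded amount, so the ratio is rational in `j`: the factors
involving `j` contribute `(2m + 3j + 3)(j + 2) / (2 (2m + 2j + 4)(2m + 2j + 3)) → 3/8`, and those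
involving only `m` contribute the constant `4 (4m² - 1) / (m (m - 1))`.
-/

/-- The part `2^(j+2) (2m+3j-1)! / ((j+1)! (2m+2j)!)` of the Goulden–Jackson formula that depends on
the number `j = (N - m) / 2`, which here is an independent argument. -/
noncomputable def bulkFactor (m j : ℕ) : ℝ :=
  2 ^ (j + 2) * (2 * m + 3 * j - 1).factorial / ((j + 1).factorial * (2 * m + 2 * j).factorial)

/-- The part `(2m-3)! / ((m-2)!)²` of the Goulden–Jackson formula that depends only on the boundary
length `m`; meaningful for `2 ≤ m`, since the subtractions truncate. -/
noncomputable def boundaryFactor (m : ℕ) : ℝ :=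
  (2 * m - 3).factorial / ((m - 2).factorial : ℝ) ^ 2

theorem C0_add_two_mul (m j : ℕ) : C0 (m + 2 * j) m = bulkFactor m j * boundaryFactor m := by
  have half_sub : (m + 2 * j - m) / 2 = j := by omega
  rw [C0, half_sub, bulkFactor, boundaryFactor, div_mul_div_comm]

theorem bulkFactor_ratio (m j : ℕ) :
    bulkFactor (m + 2) j / bulkFactor m (j + 1) =
      (2 * m + 3 * j + 3) * (j + 2) / (2 * (2 * m + 2 * j + 4) * (2 * m + 2 * j + 3)) := by
  have numerator_top : 2 * (m + 2) + 3 * j - 1 = (2 * m + 3 * j + 2) + 1 := by omega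
  have numerator_bot : 2 * m + 3 * (j + 1) - 1 = 2 * m + 3 * j + 2 := by omega
  have denominator_top : 2 * (m + 2) + 2 * j = (2 * m + 2 * j + 2) + 1 + 1 := by ring
  have denominator_bot : 2 * m + 2 * (j + 1) = 2 * m + 2 * j + 2 := by ring
  rw [bulkFactor, bulkFactor, numerator_top, numerator_bot, denominator_top, denominator_bot,
    Nat.factorial_succ (2 * m + 3 * j + 2), Nat.factorial_succ (2 * m + 2 * j + 2 + 1),
    Nat.factorial_succ (2 * m + 2 * j + 2), Nat.factorial_succ (j + 1)]
  push_cast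
  field_simp
  ring

theorem tendsto_bulkFactor_ratio (m : ℕ) :
    Tendsto (fun j : ℕ => bulkFactor (m + 2) j / bulkFactor m (j + 1)) atTop (nhds (3 / 8)) := by
  have first_quotient : Tendsto (fun j : ℕ => ((2 * m + 3 : ℝ) + 3 * j) / ((2 * m + 4 : ℝ) + 2 * j))
      atTop (nhds (3 / 2)) :=
    tendsto_add_mul_div_add_mul_atTop_nhds _ _ _ two_ne_zero
  have second_quotient : Tendsto (fun j : ℕ => ((2 : ℝ) + 1 * j) / ((2 * m + 3 : ℝ) + 2 * j))
      atTop (nhds (1 / 2)) :=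
    tendsto_add_mul_div_add_mul_atTop_nhds _ _ _ two_ne_zero
  have limit_value : (3 / 8 : ℝ) = 1 / 2 * (3 / 2) * (1 / 2) := by norm_num
  rw [limit_value]
  refine ((first_quotient.const_mul _).mul second_quotient).congr fun j => ?_
  rw [bulkFactor_ratio]
  field_simp
  ring

theorem boundaryFactor_ratio {m : ℕ} (hm : 2 ≤ m) :
    boundaryFactor (m + 2) / boundaryFactor m =
      4 * (4 * (m : ℝ) ^ 2 - 1) / ((m : ℝ) * ((m : ℝ) - 1)) := by
  obtain ⟨n, rfl⟩ := Nat.exists_eq_add_of_le' hm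
  have numerator_top : 2 * (n + 2 + 2) - 3 = (2 * n + 1) + 1 + 1 + 1 + 1 := by omega
  have numerator_bot : 2 * (n + 2) - 3 = 2 * n + 1 := by omega
  have pred_cast : ((n + 2 : ℕ) : ℝ) - 1 = n + 1 := by push_cast; ring
  rw [boundaryFactor, boundaryFactor, numerator_top, numerator_bot, pred_cast,
    Nat.add_sub_cancel, Nat.add_sub_cancel]
  simp only [Nat.factorial_succ]
  push_cast
  field_simp
  ring

theorem C0_ratio_eq_mul (m j : ℕ) :
    C0 (m + 2 * (j + 1)) (m + 2) / C0 (m + 2 * (j + 1)) m =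
      bulkFactor (m + 2) j / bulkFactor m (j + 1) *
        (boundaryFactor (m + 2) / boundaryFactor m) := by
  have same_size : m + 2 * (j + 1) = m + 2 + 2 * j := by ring
  rw [C0_add_two_mul, same_size, C0_add_two_mul, mul_div_mul_comm]

theorem six_mul_one_sub_div_one_sub {x : ℝ} (hx₀ : x ≠ 0) (hx₁ : x ≠ 1) :
    6 * ((1 - 1 / (4 * x ^ 2)) / (1 - 1 / x)) = 3 / 2 * (4 * x ^ 2 - 1) / (x * (x - 1)) := by
  have sub_one_ne_zero : x - 1 ≠ 0 := sub_ne_zero.2 hx₁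
  field_simp
  ring

theorem atTop_inf_principal_modEq_eq_map (a : ℕ) {d : ℕ} (hd : 0 < d) :
    atTop ⊓ 𝓟 {N | N ≡ a [MOD d]} = map (fun j => a + d * j) atTop := by
  refine le_antisymm (fun s hs => ?_) (le_inf ?_ ?_)
  · obtain ⟨J, hJ⟩ := mem_atTop_sets.1 (mem_map.1 hs)
    refine mem_inf_principal.2 (mem_atTop_sets.2 ⟨a + d * J, fun N hN hmod => ?_⟩)
    obtain ⟨j, rfl⟩ := (Nat.modEq_iff_exists_eq_add (le_of_add_le_left hN)).1 hmod.symm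
    exact hJ j (Nat.le_of_mul_le_mul_left (Nat.le_of_add_le_add_left hN) hd)
  · exact tendsto_atTop_mono (fun j => le_add_left (Nat.le_mul_of_pos_left j hd)) tendsto_id
  · exact tendsto_principal.2 (Eventually.of_forall fun j => by simp [Nat.ModEq])

theorem evenAtTop_eq_of_even {m : ℕ} (hm : Even m) :
    evenAtTop = atTop ⊓ 𝓟 {N | N ≡ m [MOD 2]} := by
  have modEq_iff_even (N : ℕ) : N ≡ m [MOD 2] ↔ Even N := by
    rw [Nat.ModEq, Nat.even_iff.1 hm, Nat.even_iff]
  simp only [evenAtTop, modEq_iff_even]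

theorem C0_ratio_limit_general (m : ℕ) (h2 : 2 ≤ m) :
    Tendsto (fun N : ℕ => C0 N (m + 2) / C0 N m) (atTop ⊓ 𝓟 {N | N ≡ m [MOD 2]})
      (nhds (6 * ((1 - 1 / (4 * (m : ℝ) ^ 2)) / (1 - 1 / (m : ℝ))))) ∧
    6 * ((1 - 1 / (4 * (m : ℝ) ^ 2)) / (1 - 1 / (m : ℝ))) =
      (3 / 2) * (4 * (m : ℝ) ^ 2 - 1) / ((m : ℝ) * ((m : ℝ) - 1)) := by
  have closed_form := six_mul_one_sub_div_one_sub (x := m) (by norm_cast; lia) (by norm_cast; lia)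
  refine ⟨?_, closed_form⟩
  have limit_value : (3 / 2) * (4 * (m : ℝ) ^ 2 - 1) / ((m : ℝ) * ((m : ℝ) - 1)) =
      3 / 8 * (boundaryFactor (m + 2) / boundaryFactor m) := by
    rw [boundaryFactor_ratio h2]
    ring
  rw [closed_form, limit_value, atTop_inf_principal_modEq_eq_map m two_pos, tendsto_map'_iff,
    ← tendsto_add_atTop_iff_nat 1]
  simp only [Function.comp_apply, C0_ratio_eq_mul]
  exact (tendsto_bulkFactor_ratio m).mul_const _

/-- For fixed even m ≥ 2, the one-step ratio tends to 6(1 - 1/(4m²))/(1 - 1/m). -/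
theorem C0_ratio_limit (m : ℕ) (hm : Even m) (h2 : 2 ≤ m) :
    Filter.Tendsto (fun N : ℕ => C0 N (m + 2) / C0 N m) evenAtTop
      (nhds (6 * ((1 - 1 / (4 * (m : ℝ) ^ 2)) / (1 - 1 / (m : ℝ))))) ∧
    6 * ((1 - 1 / (4 * (m : ℝ) ^ 2)) / (1 - 1 / (m : ℝ))) =
      (3 / 2) * (4 * (m : ℝ) ^ 2 - 1) / ((m : ℝ) * ((m : ℝ) - 1)) := by
  rw [evenAtTop_eq_of_even hm]
  exact C0_ratio_limit_general m h2
end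

section
/- For every β ∈ (0,1), the limit as N → ∞ along even integers of (1/N)·log C₀(N, 2⌊βN/2⌋) exists and equals (1/2)·log(27/2) + (β/2)·log 6 + (1/2)·∫₀^β log h(t) dt, where h(t) = (1 + 4t/(3(1−t)))/(1 + 2t/(1−t))². (In particular at β = 1 this expression equals log 4, the exponential growth rate of C₀(N,N).) -/
open Filter Real MeasureTheory

/-- h(t) = (1 + 4t/(3(1-t)))/(1 + 2t/(1-t))². -/
noncomputable def h (t : ℝ) : ℝ := (1 + 4 * t / (3 * (1 - t))) / (1 + 2 * t / (1 - t)) ^ 2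

/-!
Stirling's formula gives `log a! - a log N = N (c log c - c) + o(N)` whenever `a / N → c`, for every
`c ≥ 0` and with `0 log 0 = 0`. Up to bounded shifts, the arguments of the factorials in `C₀(N, m)`
are linear in `m` and `j`, and the sizes in the numerator and in the denominator balance up to a
single unit, so the terms `a log N` leave only `-log N`. This gives a closed form for the growth
rate in terms of `x log x`. On the other hand
`log h(t) = log (3 + t) + log (1 - t) - log 3 - 2 log (1 + t)` integrates to the same closed form.
-/

open Asymptotics
open scoped Topology Nat

section Stirling

variable {ι : Type*} {l : Filter ι}

lemma isLittleO_log_factorial_sub :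
    (fun n : ℕ => log (n ! : ℝ) - (n * log n - n)) =o[atTop] (fun n : ℕ => (n : ℝ)) := by
  have isLittleO_const (c : ℝ) : (fun _ : ℕ => c) =o[atTop] (fun n : ℕ => (n : ℝ)) :=
    (isLittleO_const_id_atTop c).comp_tendsto tendsto_natCast_atTop_atTop
  have isLittleO_log : (fun n : ℕ => log (n : ℝ)) =o[atTop] (fun n : ℕ => (n : ℝ)) :=
    isLittleO_log_id_atTop.comp_tendsto tendsto_natCast_atTop_atTop
  have isLittleO_log_stirlingSeq :
      (fun n => log (Stirling.stirlingSeq n)) =o[atTop] (fun n : ℕ => (n : ℝ)) :=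
    ((Stirling.tendsto_stirlingSeq_sqrt_pi.log (by positivity)).isBigO_one ℝ).trans_isLittleO
      (isLittleO_const 1)
  refine (isLittleO_log_stirlingSeq.add
    (((isLittleO_const (log 2)).add isLittleO_log).const_mul_left (1 / 2))).congr' ?_ .rfl
  filter_upwards [eventually_gt_atTop 0] with n hn
  have hn' : (n : ℝ) ≠ 0 := by positivity
  rw [Stirling.log_stirlingSeq_formula, log_mul two_ne_zero hn', log_div hn' (exp_ne_zero _),
    log_exp]
  ring

lemma exists_norm_le_mul_natCast_add {f : ℕ → ℝ}
    (hf : f =o[atTop] (fun n : ℕ => (n : ℝ))) {ε : ℝ} (hε : 0 < ε) :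
    ∃ K, ∀ n, ‖f n‖ ≤ ε * n + K := by
  obtain ⟨n₀, hn₀⟩ := eventually_atTop.1 (hf.bound hε)
  refine ⟨∑ k ∈ Finset.range n₀, ‖f k‖, fun n => ?_⟩
  have hsum : 0 ≤ ∑ k ∈ Finset.range n₀, ‖f k‖ := Finset.sum_nonneg fun k _ => norm_nonneg _
  rcases lt_or_ge n n₀ with hn | hn
  · have := Finset.single_le_sum (fun k _ => norm_nonneg (f k)) (Finset.mem_range.2 hn)
    have : 0 ≤ ε * n := by positivity
    linarith
  · have := hn₀ n hn
    rw [Real.norm_natCast] at this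
    linarith

lemma isLittleO_comp_of_isBigO_natCast {f : ℕ → ℝ} {a : ι → ℕ} {s : ι → ℝ}
    (hf : f =o[atTop] (fun n : ℕ => (n : ℝ))) (hs : Tendsto s l atTop)
    (ha : (fun i => (a i : ℝ)) =O[l] s) : (fun i => f (a i)) =o[l] s := by
  obtain ⟨C, hC, haC⟩ := ha.exists_pos
  refine isLittleO_iff.2 fun ε hε => ?_
  obtain ⟨K, hK⟩ := exists_norm_le_mul_natCast_add hf (show 0 < ε / (2 * C) by positivity)
  filter_upwards [haC.bound, hs.eventually_ge_atTop (K / (ε / 2)), hs.eventually_ge_atTop 0]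
    with i ha_le hK_le hs_nonneg
  rw [Real.norm_natCast, norm_of_nonneg hs_nonneg] at ha_le
  rw [norm_of_nonneg hs_nonneg]
  calc ‖f (a i)‖ ≤ ε / (2 * C) * a i + K := hK _
    _ ≤ ε / (2 * C) * (C * s i) + ε / 2 * s i := by
      gcongr
      rwa [div_le_iff₀' (by positivity)] at hK_le
    _ = ε * s i := by field_simp; ring

/-- The logarithm of `n!` relative to the scale `s`: the main term `n log s` is removed and the
rest is measured in units of `s`. -/
noncomputable def scaledLogFactorial (s : ℝ) (n : ℕ) : ℝ := (log (n ! : ℝ) - n * log s) / s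

lemma tendsto_scaledLogFactorial {a : ι → ℕ} {s : ι → ℝ} {c : ℝ} (hs : Tendsto s l atTop)
    (ha : Tendsto (fun i => (a i : ℝ) / s i) l (𝓝 c)) :
    Tendsto (fun i => scaledLogFactorial (s i) (a i)) l (𝓝 (c * log c - c)) := by
  have hs_ne : ∀ᶠ i in l, s i ≠ 0 := hs.eventually_ne_atTop 0
  have ha_isBigO : (fun i => (a i : ℝ)) =O[l] s :=
    isBigO_of_div_tendsto_nhds (hs_ne.mono fun i hi h0 => absurd h0 hi) c ha
  have remainder :=
    (isLittleO_comp_of_isBigO_natCast isLittleO_log_factorial_sub hs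
      ha_isBigO).tendsto_div_nhds_zero
  have main_term := ((continuous_mul_log.tendsto c).comp ha).sub ha
  refine (zero_add (c * log c - c) ▸ remainder.add main_term).congr' ?_
  filter_upwards [hs_ne] with i hsi
  rcases Nat.eq_zero_or_pos (a i) with ha0 | ha_pos
  · simp [scaledLogFactorial, ha0]
  · have hai : (a i : ℝ) ≠ 0 := by positivity
    simp only [scaledLogFactorial, Function.comp_apply, log_div hai hsi]
    field_simp
    ring

lemma tendsto_div_of_eventuallyEq_add_const {x y s : ι → ℝ} {c : ℝ} (k : ℝ)
    (hs : Tendsto s l atTop) (hx : Tendsto (fun i => x i / s i) l (𝓝 c))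
    (hy : y =ᶠ[l] fun i => x i + k) : Tendsto (fun i => y i / s i) l (𝓝 c) := by
  refine (add_zero c ▸ hx.add (hs.const_div_atTop k)).congr' ?_
  filter_upwards [hy] with i hi
  rw [hi, add_div]

end Stirling

lemma log_C0_add_two_mul (m j : ℕ) :
    log (C0 (m + 2 * j) m) = (j + 2) * log 2 + log ((2 * m + 3 * j - 1)! : ℝ)
      + log ((2 * m - 3)! : ℝ) - log ((j + 1)! : ℝ) - log ((2 * m + 2 * j)! : ℝ)
      - 2 * log ((m - 2)! : ℝ) := by
  have half_diff : (m + 2 * j - m) / 2 = j := by omega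
  have factorial_ne_zero (n : ℕ) : (n ! : ℝ) ≠ 0 := by positivity
  rw [C0, half_diff, log_div (by positivity) (by positivity),
    log_mul (by positivity) (factorial_ne_zero _), log_mul (by positivity) (factorial_ne_zero _),
    log_mul (by positivity) (by positivity),
    log_mul (factorial_ne_zero _) (factorial_ne_zero _), log_pow, log_pow]
  push_cast
  ring

-- The coefficient of `log s` is `(2m+3j-1) + (2m-3) - (j+1) - (2m+2j) - 2(m-2) = -1`.
lemma log_C0_add_two_mul_div {m : ℕ} (hm : 2 ≤ m) (j : ℕ) (s : ℝ) :
    log (C0 (m + 2 * j) m) / s = ((j + 2 : ℕ) : ℝ) / s * log 2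
      + scaledLogFactorial s (2 * m + 3 * j - 1) + scaledLogFactorial s (2 * m - 3)
      - scaledLogFactorial s (j + 1) - scaledLogFactorial s (2 * m + 2 * j)
      - 2 * scaledLogFactorial s (m - 2) - log s / s := by
  simp only [log_C0_add_two_mul, scaledLogFactorial]
  rw [Nat.cast_sub (show 1 ≤ 2 * m + 3 * j by omega), Nat.cast_sub (show 3 ≤ 2 * m by omega),
    Nat.cast_sub hm]
  push_cast
  ring

lemma mul_mul_log_mul (x y : ℝ) : x * y * log (x * y) = x * y * (log x + log y) := by
  have := negMulLog_mul x y
  simp only [negMulLog] at this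
  linear_combination -this

lemma tendsto_log_C0_add_two_mul_div {ι : Type*} {l : Filter ι} {m j : ι → ℕ} {s : ι → ℝ}
    {μ γ : ℝ} (hs : Tendsto s l atTop) (hm : ∀ᶠ i in l, 2 ≤ m i)
    (hμ : Tendsto (fun i => (m i : ℝ) / s i) l (𝓝 μ))
    (hγ : Tendsto (fun i => (j i : ℝ) / s i) l (𝓝 γ)) :
    Tendsto (fun i => log (C0 (m i + 2 * j i) (m i)) / s i) l
      (𝓝 (γ * log 2 + (2 * μ + 3 * γ) * log (2 * μ + 3 * γ) + 2 * μ * log 2 - γ * log γ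
        - (2 * μ + 2 * γ) * log (2 * μ + 2 * γ))) := by
  have linear (p q : ℝ) :
      Tendsto (fun i => (p * m i + q * j i) / s i) l (𝓝 (p * μ + q * γ)) :=
    ((hμ.const_mul p).add (hγ.const_mul q)).congr fun i => by ring
  have shifted {a : ι → ℕ} (p q k : ℝ)
      (ha : ∀ i, 2 ≤ m i → (a i : ℝ) = p * m i + q * j i + k) :
      Tendsto (fun i => (a i : ℝ) / s i) l (𝓝 (p * μ + q * γ)) :=
    tendsto_div_of_eventuallyEq_add_const k hs (linear p q) (hm.mono ha)
  have power_of_two := (shifted (a := fun i => j i + 2) 0 1 2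
    fun i _ => by push_cast; ring).mul_const (log 2)
  have numerator₁ := tendsto_scaledLogFactorial hs <| shifted (a := fun i => 2 * m i + 3 * j i - 1)
    2 3 (-1) fun i hi => by rw [Nat.cast_sub (by omega)]; push_cast; ring
  have numerator₂ := tendsto_scaledLogFactorial hs <| shifted (a := fun i => 2 * m i - 3)
    2 0 (-3) fun i hi => by rw [Nat.cast_sub (by omega)]; push_cast; ring
  have denominator₁ := tendsto_scaledLogFactorial hs <| shifted (a := fun i => j i + 1)
    0 1 1 fun i _ => by push_cast; ring
  have denominator₂ := tendsto_scaledLogFactorial hs <| shifted (a := fun i => 2 * m i + 2 * j i)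
    2 2 0 fun i _ => by push_cast; ring
  have denominator₃ := tendsto_scaledLogFactorial hs <| shifted (a := fun i => m i - 2)
    1 0 (-2) fun i hi => by rw [Nat.cast_sub hi]; push_cast; ring
  have log_div_self := isLittleO_log_id_atTop.tendsto_div_nhds_zero.comp hs
  have total := (((((power_of_two.add numerator₁).add numerator₂).sub denominator₁).sub
    denominator₂).sub (denominator₃.const_mul 2)).sub log_div_self
  convert total.congr' ?_ using 2
  · simp only [zero_mul, one_mul, zero_add, add_zero, mul_mul_log_mul]
    ring
  · filter_upwards [hm] with i hi
    exact (log_C0_add_two_mul_div hi (j i) (s i)).symm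

lemma log_h {t : ℝ} (ht : t ∈ Set.Ioo (-1) 1) :
    log (h t) = log (3 + t) + log (1 - t) - log 3 - 2 * log (1 + t) := by
  have one_sub_ne : 1 - t ≠ 0 := by linarith [ht.2]
  have one_add_ne : 1 + t ≠ 0 := by linarith [ht.1]
  have three_add_ne : 3 + t ≠ 0 := by linarith [ht.1]
  have numerator : 1 + 4 * t / (3 * (1 - t)) = (3 + t) / (3 * (1 - t)) := by field_simp; ring
  have denominator : 1 + 2 * t / (1 - t) = (1 + t) / (1 - t) := by field_simp; ring
  have factored : h t = (3 + t) * (1 - t) / 3 / (1 + t) ^ 2 := by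
    rw [h, numerator, denominator]
    field_simp
  rw [factored, log_div (by positivity) (by positivity), log_div (by positivity) three_ne_zero,
    log_mul three_add_ne one_sub_ne, log_pow]
  push_cast
  ring

lemma integral_log_h {β : ℝ} (hβ : β ∈ Set.Icc (-1) 1) :
    ∫ t in (0 : ℝ)..β, log (h t) =
      (3 + β) * log (3 + β) - (1 - β) * log (1 - β) - 2 * ((1 + β) * log (1 + β))
        - (3 + β) * log 3 := by
  have integrand : ∫ t in (0 : ℝ)..β, log (h t) =
      ∫ t in (0 : ℝ)..β, (log (3 + t) + log (1 - t) - log 3 - 2 * log (1 + t)) := by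
    refine intervalIntegral.integral_congr_ae ?_
    filter_upwards [Measure.ae_ne volume 1] with t ht1 ⟨hlo, hhi⟩
    exact log_h ⟨(le_min (by norm_num) hβ.1).trans_lt hlo,
      lt_of_le_of_ne (hhi.trans (max_le zero_le_one hβ.2)) ht1⟩
  have integrable_add (c : ℝ) : IntervalIntegrable (fun t => log (c + t)) volume 0 β := by
    simpa using (intervalIntegral.intervalIntegrable_log' (a := c + 0) (b := c + β)).comp_add_left c
  have integrable_sub : IntervalIntegrable (fun t => log (1 - t)) volume 0 β := by
    simpa using (intervalIntegral.intervalIntegrable_log' (a := 1 - 0) (b := 1 - β)).comp_sub_left 1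
  rw [integrand,
    intervalIntegral.integral_sub
      (((integrable_add 3).add integrable_sub).sub intervalIntegrable_const)
      ((integrable_add 1).const_mul 2),
    intervalIntegral.integral_sub ((integrable_add 3).add integrable_sub) intervalIntegrable_const,
    intervalIntegral.integral_add (integrable_add 3) integrable_sub,
    intervalIntegral.integral_const_mul, intervalIntegral.integral_const,
    intervalIntegral.integral_comp_add_left log, intervalIntegral.integral_comp_add_left log,
    intervalIntegral.integral_comp_sub_left log]
  simp only [integral_log, smul_eq_mul, add_zero, sub_zero, log_one]
  ring

/-- The exponential growth rate of `C₀(N, m)` as `N → ∞` and `m / N → β`. -/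
noncomputable def growthRate (β : ℝ) : ℝ :=
  (1 / 2) * log (27 / 2) + (β / 2) * log 6 + (1 / 2) * ∫ t in (0 : ℝ)..β, log (h t)

lemma growthRate_eq {β : ℝ} (hβ : β ∈ Set.Icc (-1) 1) :
    growthRate β = (1 + 3 * β) / 2 * log 2 + (3 + β) / 2 * log ((3 + β) / 2)
      - (1 - β) / 2 * log ((1 - β) / 2) - (1 + β) * log (1 + β) := by
  have log_twentySeven_halves : log (27 / 2) = 3 * log 3 - log 2 := by
    rw [log_div (by norm_num) two_ne_zero, show (27 : ℝ) = 3 ^ 3 by norm_num, log_pow]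
    norm_num
  have log_six : log 6 = log 2 + log 3 := by
    rw [← log_mul two_ne_zero three_ne_zero]
    norm_num
  have mul_log_half (x : ℝ) : x / 2 * log (x / 2) = x / 2 * (log x - log 2) := by
    rw [div_eq_mul_inv, mul_mul_log_mul, log_inv, sub_eq_add_neg]
  rw [growthRate, integral_log_h hβ, log_twentySeven_halves, log_six, mul_log_half, mul_log_half]
  ring

lemma growthRate_one : growthRate 1 = log 4 := by
  have log_four : log 4 = 2 * log 2 := by
    rw [show (4 : ℝ) = 2 ^ 2 by norm_num, log_pow]
    norm_num
  rw [growthRate_eq (by norm_num), log_four]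
  norm_num

lemma two_mul_floor_half_le {x : ℝ} {n : ℕ} (hx : x ≤ n) : 2 * ⌊x / 2⌋₊ ≤ n := by
  rw [Nat.floor_div_ofNat]
  exact (Nat.mul_div_le _ 2).trans (Nat.floor_le_of_le hx)

lemma tendsto_two_mul_floor_half_div {β : ℝ} (hβ : 0 ≤ β) :
    Tendsto (fun N : ℕ => ((2 * ⌊β * N / 2⌋₊ : ℕ) : ℝ) / N) atTop (𝓝 β) := by
  have floor_div := ((tendsto_nat_floor_mul_div_atTop (show 0 ≤ β / 2 by positivity)).comp
    tendsto_natCast_atTop_atTop).const_mul 2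
  refine (mul_div_cancel₀ β two_ne_zero ▸ floor_div).congr fun N => ?_
  simp only [Function.comp_apply, mul_div_right_comm]
  push_cast
  ring

lemma eventually_two_le_two_mul_floor_half {β : ℝ} (hβ : 0 < β) :
    ∀ᶠ N : ℕ in atTop, 2 ≤ 2 * ⌊β * N / 2⌋₊ := by
  filter_upwards [(tendsto_natCast_atTop_atTop.const_mul_atTop hβ).eventually_ge_atTop 2] with N hN
  have : 1 ≤ ⌊β * N / 2⌋₊ := Nat.one_le_floor_iff _ |>.2 (by linarith)
  omega

theorem C0_beta_growth_general {ι : Type*} {l : Filter ι} {N m : ι → ℕ} {β : ℝ}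
    (hN : Tendsto N l atTop) (two_le_m : ∀ᶠ i in l, 2 ≤ m i) (m_le_N : ∀ᶠ i in l, m i ≤ N i)
    (parity : ∀ᶠ i in l, N i ≡ m i [MOD 2])
    (hβ : Tendsto (fun i => (m i : ℝ) / N i) l (𝓝 β)) :
    Tendsto (fun i => 1 / (N i : ℝ) * log (C0 (N i) (m i))) l (𝓝 (growthRate β)) := by
  rcases l.eq_or_neBot with rfl | _
  · exact tendsto_bot
  have hN' : Tendsto (fun i => (N i : ℝ)) l atTop := tendsto_natCast_atTop_atTop.comp hN
  have β_nonneg : 0 ≤ β := ge_of_tendsto' hβ fun i => by positivity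
  have β_le_one : β ≤ 1 := le_of_tendsto hβ <| m_le_N.mono fun i hi =>
    div_le_one_of_le₀ (mod_cast hi) (Nat.cast_nonneg _)
  obtain ⟨j, hj⟩ : ∃ j : ι → ℕ, ∀ᶠ i in l, N i = m i + 2 * j i := by
    refine ⟨fun i => (N i - m i) / 2, ?_⟩
    filter_upwards [m_le_N, parity] with i hle hpar
    have : N i % 2 = m i % 2 := hpar
    omega
  have hγ : Tendsto (fun i => (j i : ℝ) / N i) l (𝓝 ((1 - β) / 2)) := by
    refine ((hβ.const_sub 1).div_const 2).congr' ?_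
    filter_upwards [hj, hN'.eventually_ne_atTop 0] with i hi hNi
    have hi' : (N i : ℝ) = m i + 2 * j i := mod_cast hi
    field_simp
    linarith
  have key := tendsto_log_C0_add_two_mul_div hN' two_le_m hβ hγ
  rw [growthRate_eq ⟨by linarith, β_le_one⟩]
  convert key.congr' ?_ using 2
  · ring_nf
  · filter_upwards [hj] with i hi
    rw [← hi, one_div_mul_eq_div]

/-- Exponential growth rate of C₀(N, 2⌊βN/2⌋) for β ∈ (0,1), and the value at β = 1. -/
theorem C0_beta_growth :
    (∀ β : ℝ, β ∈ Set.Ioo (0 : ℝ) 1 →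
      Filter.Tendsto (fun N : ℕ => (1 / (N : ℝ)) * Real.log (C0 N (2 * ⌊β * N / 2⌋₊)))
        evenAtTop
        (nhds ((1 / 2) * Real.log (27 / 2) + (β / 2) * Real.log 6 +
          (1 / 2) * ∫ t in (0 : ℝ)..β, Real.log (h t)))) ∧
    (1 / 2 : ℝ) * Real.log (27 / 2) + (1 / 2) * Real.log 6 +
        (1 / 2) * ∫ t in (0 : ℝ)..1, Real.log (h t) = Real.log 4 := by
  refine ⟨fun β ⟨β_pos, β_lt_one⟩ => ?_, growthRate_one⟩
  have evenAtTop_le : evenAtTop ≤ atTop := inf_le_left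
  have eventually_even : ∀ᶠ N in evenAtTop, Even N := mem_inf_of_right (mem_principal_self _)
  refine C0_beta_growth_general evenAtTop_le
    (evenAtTop_le (eventually_two_le_two_mul_floor_half β_pos))
    (.of_forall fun N => two_mul_floor_half_le (mul_le_of_le_one_left N.cast_nonneg β_lt_one.le))
    (eventually_even.mono fun N hN => ?_)
    ((tendsto_two_mul_floor_half_div β_pos.le).mono_left evenAtTop_le)
  exact (Nat.even_iff.1 hN).trans (Nat.mul_mod_right 2 _).symm
end

section
/- Free energy, elongated region: if μ₁ < log 6 then the free energy F = lim_{N→∞, N even} (1/N)·log Z_{0,N}(μ₁) exists and equals −(3/2)·μ₁ + (1/2)·log(27/2) + (β₀/2)·(log 6 − μ₁) + (1/2)·∫₀^{β₀} log h(β) dβ, where β₀ ∈ (0,1) is the unique solution of 6·h(β₀)·exp(−μ₁) = 1. -/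
open Filter Real MeasureTheory

/-- The partition function Z_{0,N}(μ₁) = exp(-3μ₁N/2) Σ_{m even, 2 ≤ m ≤ N} exp(-μ₁m/2) C₀(N,m). -/
noncomputable def Z (μ₁ : ℝ) (N : ℕ) : ℝ :=
  Real.exp (-3 * μ₁ * N / 2) *
    ∑ m ∈ (Finset.range (N + 1)).filter (fun m => Even m ∧ 2 ≤ m),
      Real.exp (-μ₁ * m / 2) * C0 N m

/-!
Up to a rational factor, `C₀(m + 2j, m)` is `2 ^ j` times `(2m + 3j choose j)` times
`(2m choose m)`, so by Stirling `C₀(N, βN)` grows like `exp (N g(β))` for an explicit continuous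
`g` with `g(0) = log (27/2) / 2` and derivative `log (6 h(β)) / 2`. Since `h` decreases, `g` is
concave, and the Boltzmann-weighted exponent `g(β) - μ₁ β / 2` is maximal where
`6 h(β) exp (-μ₁) = 1`. As `Z` has only polynomially many terms, its exponential growth rate is
that maximum (the Laplace principle), and integrating the derivative of `g` from `0` to `β₀`
evaluates it.
-/

open Asymptotics
open scoped Nat Topology

section LaplacePrinciple

variable {ι κ : Type*}

theorem log_sum_le_log_card_add {s : Finset κ} {a : κ → ℝ} {M : ℝ} (hs : s.Nonempty)
    (ha : ∀ k ∈ s, 0 < a k) (hM : ∀ k ∈ s, log (a k) ≤ M) :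
    log (∑ k ∈ s, a k) ≤ log s.card + M := by
  have hcard : (s.card : ℝ) ≠ 0 := by exact_mod_cast hs.card_pos.ne'
  have hsum : ∑ k ∈ s, a k ≤ s.card * exp M := by
    rw [← nsmul_eq_mul]
    exact s.sum_le_card_nsmul a _ fun k hk => (log_le_iff_le_exp (ha k hk)).1 (hM k hk)
  calc log (∑ k ∈ s, a k) ≤ log (s.card * exp M) := log_le_log (Finset.sum_pos ha hs) hsum
    _ = log s.card + M := by rw [log_mul hcard (exp_ne_zero M), log_exp]

theorem log_le_log_sum {s : Finset κ} {a : κ → ℝ} {k : κ} (ha : ∀ k ∈ s, 0 < a k) (hk : k ∈ s) :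
    log (a k) ≤ log (∑ k ∈ s, a k) :=
  log_le_log (ha k hk) (Finset.single_le_sum (fun i hi => (ha i hi).le) hk)

theorem tendsto_log_sum_div {l : Filter ι} {s : ι → Finset κ} {a r : ι → κ → ℝ} {n E : ι → ℝ}
    {k : ι → κ} {M : ℝ} (hn : ∀ᶠ i in l, 0 < n i) (hE : E =o[l] n)
    (hcard : ∀ᶠ i in l, log (s i).card ≤ E i) (ha : ∀ᶠ i in l, ∀ j ∈ s i, 0 < a i j)
    (hr : ∀ᶠ i in l, ∀ j ∈ s i, |log (a i j) - n i * r i j| ≤ E i)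
    (hM : ∀ᶠ i in l, ∀ j ∈ s i, r i j ≤ M) (hk : ∀ᶠ i in l, k i ∈ s i)
    (hkM : Tendsto (fun i => r i (k i)) l (𝓝 M)) :
    Tendsto (fun i => log (∑ j ∈ s i, a i j) / n i) l (𝓝 M) := by
  have hE₀ : Tendsto (fun i => E i / n i) l (𝓝 0) := hE.tendsto_div_nhds_zero
  have lower : Tendsto (fun i => r i (k i) - E i / n i) l (𝓝 M) := by simpa using hkM.sub hE₀
  have upper : Tendsto (fun i => M + 2 * (E i / n i)) l (𝓝 M) := by
    simpa using (hE₀.const_mul 2).const_add M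
  refine tendsto_of_tendsto_of_tendsto_of_le_of_le' lower upper ?_ ?_
  · filter_upwards [hn, ha, hr, hk] with i hni hai hri hki
    have hlog := log_le_log_sum hai hki
    have hrate := (abs_le.1 (hri _ hki)).1
    rw [le_div_iff₀ hni, sub_mul, div_mul_cancel₀ _ hni.ne']
    linarith
  · filter_upwards [hn, hcard, ha, hr, hM, hk] with i hni hci hai hri hMi hki
    have hterm : ∀ j ∈ s i, log (a i j) ≤ n i * M + E i := fun j hj => by
      have hrate := (abs_le.1 (hri j hj)).2
      have hmax := mul_le_mul_of_nonneg_left (hMi j hj) hni.le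
      linarith
    have hlog := log_sum_le_log_card_add ⟨k i, hki⟩ hai hterm
    rw [div_le_iff₀ hni, add_mul, mul_assoc, div_mul_cancel₀ _ hni.ne']
    linarith

end LaplacePrinciple

theorem le_tangent_of_concaveOn {S : Set ℝ} {f : ℝ → ℝ} {f' x y : ℝ} (hf : ConcaveOn ℝ S f)
    (hx : x ∈ S) (hy : y ∈ S) (hf' : HasDerivAt f f' x) : f y ≤ f x + f' * (y - x) := by
  rcases lt_trichotomy x y with hxy | rfl | hyx
  · have hslope := hf.slope_le_of_hasDerivAt hx hy hxy hf'
    rw [slope_def_field, div_le_iff₀ (sub_pos.2 hxy)] at hslope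
    linarith
  · simp
  · have hslope := hf.le_slope_of_hasDerivAt hy hx hyx hf'
    rw [slope_def_field, le_div_iff₀ (sub_pos.2 hyx)] at hslope
    linarith

theorem log_natCast_le_log_natCast {i n : ℕ} (hin : i ≤ n) : log i ≤ log n := by
  rcases i.eq_zero_or_pos with rfl | hi
  · simpa using log_natCast_nonneg n
  · exact log_le_log (by exact_mod_cast hi) (by exact_mod_cast hin)

theorem isLittleO_log_const_mul_natCast {c : ℝ} (hc : 0 < c) :
    (fun n : ℕ => log (c * n)) =o[atTop] fun n : ℕ => (n : ℝ) :=
  (isLittleO_log_id_atTop.comp_tendsto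
    (tendsto_natCast_atTop_atTop.const_mul_atTop hc)).trans_isBigO
      (isBigO_const_mul_self c _ atTop)

section Stirling

theorem mul_log_sub_le_log_factorial (n : ℕ) : n * log n - n ≤ log n ! := by
  rcases eq_or_ne n 0 with rfl | hn
  · simp
  have hstirling := Stirling.le_log_factorial_stirling hn
  have hlog : 0 ≤ log n := log_natCast_nonneg n
  have hpi : 0 ≤ log (2 * π) := log_nonneg (by linarith [pi_gt_three])
  linarith

theorem log_factorial_le (n : ℕ) : log n ! ≤ n * log n - n + (log n + 1) := by
  cases n with
  | zero => simp
  | succ n =>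
    have hanti : log (Stirling.stirlingSeq (n + 1)) ≤ log (Stirling.stirlingSeq 1) :=
      Stirling.log_stirlingSeq'_antitone n.zero_le
    have hlog : 0 ≤ log (n + 1 : ℕ) := log_natCast_nonneg _
    rw [Stirling.log_stirlingSeq_formula, Stirling.log_stirlingSeq_formula,
      log_mul two_ne_zero (by positivity), log_div (by positivity) (exp_ne_zero 1)] at hanti
    simp only [Nat.factorial_one, Nat.cast_one, log_one, mul_one, one_mul, one_div, log_inv,
      log_exp] at hanti
    linarith

end Stirling

section MixingEntropy

/-- The unnormalised entropy of mixing `(x + y) log (x + y) - x log x - y log y`: the exponential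
growth rate of the binomial coefficients `(x + y choose y)`. -/
noncomputable def mixingEntropy (x y : ℝ) : ℝ := negMulLog x + negMulLog y - negMulLog (x + y)

theorem mixingEntropy_mul_mul (c x y : ℝ) :
    mixingEntropy (c * x) (c * y) = c * mixingEntropy x y := by
  simp only [mixingEntropy, ← mul_add, negMulLog_mul]
  ring

theorem hasDerivAt_mixingEntropy {f g : ℝ → ℝ} {f' g' t : ℝ} (hf : HasDerivAt f f' t)
    (hg : HasDerivAt g g' t) (hft : 0 < f t) (hgt : 0 < g t) :
    HasDerivAt (fun u => mixingEntropy (f u) (g u))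
      (f' * log ((f t + g t) / f t) + g' * log ((f t + g t) / g t)) t := by
  have hsum : 0 < f t + g t := add_pos hft hgt
  have hderiv := (((hasDerivAt_negMulLog hft.ne').comp t hf).add
    ((hasDerivAt_negMulLog hgt.ne').comp t hg)).sub
      ((hasDerivAt_negMulLog hsum.ne').comp t (hf.add hg))
  refine hderiv.congr_deriv ?_
  rw [log_div hsum.ne' hft.ne', log_div hsum.ne' hgt.ne']
  ring

theorem abs_log_choose_sub_mixingEntropy_le (n k : ℕ) :
    |log ((n + k).choose k) - mixingEntropy n k| ≤ 2 * (log (n + k : ℕ) + 1) := by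
  have hchoose : log ((n + k).choose k) = log (n + k)! - log n ! - log k ! := by
    rw [← Nat.choose_symm_add, Nat.cast_add_choose, log_div (by positivity) (by positivity),
      log_mul (by positivity) (by positivity), sub_sub]
  have hn := log_natCast_le_log_natCast (Nat.le_add_right n k)
  have hk := log_natCast_le_log_natCast (Nat.le_add_left k n)
  have hnonneg : 0 ≤ log (n + k : ℕ) := log_natCast_nonneg _
  have lower₁ := mul_log_sub_le_log_factorial (n + k)
  have lower₂ := mul_log_sub_le_log_factorial n
  have lower₃ := mul_log_sub_le_log_factorial k
  have upper₁ := log_factorial_le (n + k)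
  have upper₂ := log_factorial_le n
  have upper₃ := log_factorial_le k
  simp only [mixingEntropy, negMulLog, hchoose, Nat.cast_add] at *
  rw [abs_le]
  constructor <;> linarith

end MixingEntropy

theorem abs_log_centralBinom_sub_le {m : ℕ} (hm : 0 < m) :
    |log m.centralBinom - 2 * m * log 2| ≤ log (2 * m) := by
  have hpos : (0 : ℝ) < m.centralBinom := by exact_mod_cast m.centralBinom_pos
  have hpow : log ((4 : ℝ) ^ m) = 2 * m * log 2 := by
    rw [log_pow, show (4 : ℝ) = 2 ^ 2 by norm_num, log_pow]
    push_cast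
    ring
  have upper : log m.centralBinom ≤ log ((4 : ℝ) ^ m) :=
    log_le_log hpos (by exact_mod_cast m.centralBinom_le_four_pow)
  have lower : log ((4 : ℝ) ^ m) ≤ log (2 * m * m.centralBinom) :=
    log_le_log (by positivity)
      (by exact_mod_cast Nat.four_pow_le_two_mul_self_mul_centralBinom m hm)
  rw [log_mul (by positivity) hpos.ne'] at lower
  rw [abs_le]
  constructor <;> linarith

section Count

/-- The rational factor by which `C₀(m + 2j, m)` differs from
`2 ^ j * (2m + 3j choose j) * (2m choose m)`, at `x = m` and `y = j`. -/
noncomputable def rationalFactor (x y : ℝ) : ℝ :=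
  x * (x - 1) / ((2 * x - 1) * (2 * x + 3 * y) * (y + 1))

theorem rationalFactor_pos {x y : ℝ} (hx : 1 < x) (hy : 0 ≤ y) : 0 < rationalFactor x y := by
  have hodd : 0 < 2 * x - 1 := by linarith
  unfold rationalFactor
  positivity

theorem abs_log_rationalFactor_le {x y : ℝ} (hx : 2 ≤ x) (hy : 0 ≤ y) :
    |log (rationalFactor x y)| ≤ 3 * log (2 * (x + 2 * y)) := by
  have hpos : 0 < rationalFactor x y := rationalFactor_pos (by linarith) hy
  have hx' : 0 < 2 * x - 1 := by linarith
  have upper : rationalFactor x y ≤ 1 := by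
    refine (div_le_one (by positivity)).2 ?_
    calc x * (x - 1) ≤ (2 * x + 3 * y) * (2 * x - 1) := by gcongr <;> linarith
      _ = (2 * x - 1) * (2 * x + 3 * y) * 1 := by ring
      _ ≤ (2 * x - 1) * (2 * x + 3 * y) * (y + 1) := by gcongr; linarith
  have lower : ((2 * (x + 2 * y)) ^ 3)⁻¹ ≤ rationalFactor x y := by
    rw [← one_div]
    refine div_le_div₀ (by nlinarith) (by nlinarith) (by positivity) ?_
    calc (2 * x - 1) * (2 * x + 3 * y) * (y + 1)
        ≤ 2 * (x + 2 * y) * (2 * (x + 2 * y)) * (2 * (x + 2 * y)) := by gcongr <;> linarith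
      _ = (2 * (x + 2 * y)) ^ 3 := by ring
  have log_lower := log_le_log (by positivity) lower
  rw [log_inv, log_pow, Nat.cast_ofNat] at log_lower
  rw [abs_of_nonpos (log_nonpos hpos.le upper)]
  linarith

theorem C0_add_two_mul_s8 {m : ℕ} (hm : 2 ≤ m) (j : ℕ) :
    C0 (m + 2 * j) m =
      2 ^ j * (2 * m + 2 * j + j).choose j * m.centralBinom * rationalFactor m j := by
  obtain ⟨k, rfl⟩ := Nat.exists_eq_add_of_le' hm
  have hj : (k + 2 + 2 * j - (k + 2)) / 2 = j := by omega
  have htop : 2 * (k + 2) + 3 * j - 1 = 2 * k + 3 + 3 * j := by omega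
  have hbot : 2 * (k + 2) - 3 = 2 * k + 1 := by omega
  have hchoose : ((2 * (k + 2) + 2 * j + j).choose j : ℝ) =
      (2 * k + 3 + 3 * j + 1) * (2 * k + 3 + 3 * j)! / ((2 * (k + 2) + 2 * j)! * j !) := by
    rw [← Nat.choose_symm_add, Nat.cast_add_choose,
      show 2 * (k + 2) + 2 * j + j = 2 * k + 3 + 3 * j + 1 by ring, Nat.factorial_succ]
    push_cast
    rfl
  have hcentral : ((k + 2).centralBinom : ℝ) =
      (2 * k + 4) * (2 * k + 3) * (2 * k + 2) * (2 * k + 1)! / ((k + 2) * (k + 1) * k !) ^ 2 := by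
    rw [Nat.centralBinom_eq_two_mul_choose, two_mul, Nat.cast_add_choose,
      show k + 2 + (k + 2) = 2 * k + 1 + 1 + 1 + 1 by ring]
    simp only [Nat.factorial_succ]
    push_cast
    ring
  have hodd : 2 * ((k : ℝ) + 2) - 1 ≠ 0 := by linarith [k.cast_nonneg (α := ℝ)]
  rw [C0, hj, htop, hbot, hchoose, hcentral, rationalFactor, Nat.add_sub_cancel,
    Nat.factorial_succ j]
  push_cast
  field_simp
  ring

theorem C0_add_two_mul_pos {m : ℕ} (hm : 2 ≤ m) (j : ℕ) : 0 < C0 (m + 2 * j) m := by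
  have hchoose : 0 < (2 * m + 2 * j + j).choose j := Nat.choose_pos (Nat.le_add_left _ _)
  have hfactor : 0 < rationalFactor m j :=
    rationalFactor_pos (by exact_mod_cast hm) j.cast_nonneg
  have hcentral := m.centralBinom_pos
  rw [C0_add_two_mul_s8 hm]
  positivity

/-- The exponential growth rate of `C₀(N, m)` as `N → ∞` with `m / N → β`: the contributions of
`2 ^ j`, `(2m choose m)` and `(2m + 3j choose j)`, where `j / N → (1 - β) / 2`. -/
noncomputable def countRate (β : ℝ) : ℝ :=
  (2 * β + (1 - β) / 2) * log 2 + mixingEntropy (1 + β) ((1 - β) / 2)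

theorem mul_countRate_div {x y : ℝ} (hxy : x + 2 * y ≠ 0) :
    (x + 2 * y) * countRate (x / (x + 2 * y)) =
      y * log 2 + 2 * x * log 2 + mixingEntropy (2 * x + 2 * y) y := by
  rw [countRate, mul_add, ← mixingEntropy_mul_mul,
    show (x + 2 * y) * (1 + x / (x + 2 * y)) = 2 * x + 2 * y by field_simp; ring,
    show (x + 2 * y) * ((1 - x / (x + 2 * y)) / 2) = y by field_simp; ring]
  field_simp
  ring

theorem abs_log_C0_sub_le {m : ℕ} (hm : 2 ≤ m) (j : ℕ) :
    |log (C0 (m + 2 * j) m) - (m + 2 * j : ℕ) * countRate (m / (m + 2 * j : ℕ))| ≤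
      6 * log (2 * (m + 2 * j : ℕ)) + 2 := by
  have hm' : (2 : ℝ) ≤ m := by exact_mod_cast hm
  have hj : (0 : ℝ) ≤ j := j.cast_nonneg
  have hchoose_pos : (0 : ℝ) < (2 * m + 2 * j + j).choose j := by
    exact_mod_cast Nat.choose_pos (Nat.le_add_left _ _)
  have hcentral_pos : (0 : ℝ) < m.centralBinom := by exact_mod_cast m.centralBinom_pos
  have hfactor_pos : 0 < rationalFactor m j := rationalFactor_pos (by linarith) hj
  have hchoose := abs_log_choose_sub_mixingEntropy_le (2 * m + 2 * j) j
  have hcentral := abs_log_centralBinom_sub_le (show 0 < m by omega)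
  have hfactor := abs_log_rationalFactor_le hm' hj
  push_cast at hchoose ⊢
  have hlog₁ : log (2 * m + 2 * j + j) ≤ log (2 * (m + 2 * j)) :=
    log_le_log (by positivity) (by linarith)
  have hlog₂ : log (2 * m) ≤ log (2 * (m + 2 * j)) := log_le_log (by positivity) (by linarith)
  rw [C0_add_two_mul_s8 hm, log_mul (by positivity) hfactor_pos.ne',
    log_mul (by positivity) hcentral_pos.ne', log_mul (by positivity) hchoose_pos.ne', log_pow,
    mul_countRate_div (by positivity)]
  rw [abs_le] at *
  constructor <;> linarith

end Count

section Rate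

theorem h_eq {β : ℝ} (hβ : β ∈ Set.Ioo (-1) 1) :
    h β = (3 + β) * (1 - β) / (3 * (1 + β) ^ 2) := by
  have hsub : 1 - β ≠ 0 := by linarith [hβ.2]
  have hadd : 1 + β ≠ 0 := by linarith [hβ.1]
  have hden : 1 + 2 * β / (1 - β) = (1 + β) / (1 - β) := by field_simp; ring
  rw [h, hden]
  field_simp
  ring

theorem h_pos {β : ℝ} (hβ : β ∈ Set.Ioo (-1) 1) : 0 < h β := by
  have hsub : 0 < 1 - β := by linarith [hβ.2]
  have hadd : 0 < 1 + β := by linarith [hβ.1]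
  have hthree : 0 < 3 + β := by linarith
  rw [h_eq hβ]
  positivity

theorem antitoneOn_h : AntitoneOn h (Set.Ioo (-1) 1) := by
  have h_eq_sub {β : ℝ} (hβ : β ∈ Set.Ioo (-1) 1) : h β = (4 / (1 + β) ^ 2 - 1) / 3 := by
    have hadd : 1 + β ≠ 0 := by linarith [hβ.1]
    rw [h_eq hβ]
    field_simp
    ring
  intro a ha b hb hab
  have hadd : 0 < 1 + a := by linarith [ha.1]
  rw [h_eq_sub ha, h_eq_sub hb]
  gcongr

theorem continuousOn_h : ContinuousOn h (Set.Ioo (-1) 1) := by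
  refine ContinuousOn.congr (ContinuousOn.div (by fun_prop) (by fun_prop) fun β hβ => ?_)
    fun β hβ => h_eq hβ
  have hadd : 0 < 1 + β := by linarith [hβ.1]
  positivity

theorem continuous_countRate : Continuous countRate := by
  unfold countRate mixingEntropy
  fun_prop

theorem hasDerivAt_countRate {β : ℝ} (hβ : β ∈ Set.Ioo (-1) 1) :
    HasDerivAt countRate (log (6 * h β) / 2) β := by
  have hsub : 0 < 1 - β := by linarith [hβ.2]
  have hadd : 0 < 1 + β := by linarith [hβ.1]
  have hthree : 0 < 3 + β := by linarith
  have hhalf : HasDerivAt (fun β : ℝ => (1 - β) / 2) (-1 / 2) β :=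
    ((hasDerivAt_id β).const_sub 1).div_const 2
  have hentropy := hasDerivAt_mixingEntropy ((hasDerivAt_id β).const_add 1) hhalf hadd
    (half_pos hsub)
  have hlinear := (((hasDerivAt_id β).const_mul 2).add hhalf).mul_const (log 2)
  refine (hlinear.add hentropy).congr_deriv ?_
  simp only [id]
  rw [h_eq hβ, show 1 + β + (1 - β) / 2 = (3 + β) / 2 by ring,
    show 6 * ((3 + β) * (1 - β) / (3 * (1 + β) ^ 2)) = 2 * (3 + β) * (1 - β) / (1 + β) ^ 2 by
      field_simp; ring,
    show (3 + β) / 2 / ((1 - β) / 2) = (3 + β) / (1 - β) by field_simp,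
    log_div (by positivity) hadd.ne', log_div hthree.ne' two_ne_zero,
    log_div hthree.ne' hsub.ne', log_div (by positivity) (by positivity),
    log_mul (by positivity) hsub.ne', log_mul two_ne_zero hthree.ne', log_pow]
  push_cast
  ring

theorem concaveOn_countRate : ConcaveOn ℝ (Set.Icc (-1) 1) countRate := by
  refine AntitoneOn.concaveOn_of_deriv (convex_Icc _ _) continuous_countRate.continuousOn ?_ ?_
  · rw [interior_Icc]
    exact fun β hβ => (hasDerivAt_countRate hβ).differentiableAt.differentiableWithinAt
  · rw [interior_Icc]
    intro a ha b hb hab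
    have hb_pos := h_pos hb
    rw [(hasDerivAt_countRate ha).deriv, (hasDerivAt_countRate hb).deriv]
    gcongr
    exact antitoneOn_h ha hb hab

theorem countRate_sub_le {μ β₀ β : ℝ} (hβ₀ : β₀ ∈ Set.Ioo (-1) 1)
    (hsol : 6 * h β₀ * exp (-μ) = 1) (hβ : β ∈ Set.Icc (-1) 1) :
    countRate β - μ / 2 * β ≤ countRate β₀ - μ / 2 * β₀ := by
  have hlog : log (6 * h β₀) = μ := by
    rw [exp_neg, mul_inv_eq_one₀ (exp_ne_zero μ)] at hsol
    rw [hsol, log_exp]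
  have htangent := le_tangent_of_concaveOn concaveOn_countRate (Set.Ioo_subset_Icc_self hβ₀) hβ
    (hasDerivAt_countRate hβ₀)
  rw [hlog] at htangent
  linarith

theorem countRate_zero : countRate 0 = log (27 / 2) / 2 := by
  have hlog₁ : log (27 / 2) = 3 * log 3 - log 2 := by
    rw [log_div (by norm_num) two_ne_zero, show (27 : ℝ) = 3 ^ 3 by norm_num, log_pow]
    norm_num
  have hlog₂ : log (3 / 2) = log 3 - log 2 := log_div three_ne_zero two_ne_zero
  have hlog₃ : log (1 / 2) = -log 2 := by rw [one_div, log_inv]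
  norm_num only [countRate, mixingEntropy, negMulLog, log_one, hlog₁, hlog₂, hlog₃]
  ring

theorem countRate_eq_integral {β₀ : ℝ} (hβ₀ : β₀ ∈ Set.Ioo (-1) 1) :
    countRate β₀ =
      log (27 / 2) / 2 + β₀ / 2 * log 6 + 1 / 2 * ∫ β in (0 : ℝ)..β₀, log (h β) := by
  have hsub : Set.uIcc 0 β₀ ⊆ Set.Ioo (-1) 1 :=
    Set.ordConnected_Ioo.uIcc_subset (by norm_num) hβ₀
  have hint : IntervalIntegrable (fun β => log (h β)) volume 0 β₀ :=
    ((continuousOn_h.mono hsub).log fun β hβ => (h_pos (hsub hβ)).ne').intervalIntegrable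
  have hderiv (β : ℝ) (hβ : β ∈ Set.uIcc 0 β₀) :
      HasDerivAt countRate ((log 6 + log (h β)) / 2) β := by
    rw [← log_mul (by norm_num) (h_pos (hsub hβ)).ne']
    exact hasDerivAt_countRate (hsub hβ)
  have hftc := intervalIntegral.integral_eq_sub_of_hasDerivAt hderiv
    ((intervalIntegrable_const.add hint).div_const 2)
  rw [intervalIntegral.integral_div, intervalIntegral.integral_add intervalIntegrable_const hint,
    intervalIntegral.integral_const, countRate_zero, smul_eq_mul, sub_zero] at hftc
  linarith

end Rate

section PartitionFunction

/-- The boundary lengths `m` over which `Z` sums: the even `m` with `2 ≤ m ≤ N`. -/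
def boundaryLengths (N : ℕ) : Finset ℕ := (Finset.range (N + 1)).filter fun m => Even m ∧ 2 ≤ m

theorem mem_boundaryLengths {N m : ℕ} : m ∈ boundaryLengths N ↔ m ≤ N ∧ Even m ∧ 2 ≤ m := by
  simp only [boundaryLengths, Finset.mem_filter, Finset.mem_range, Nat.lt_succ_iff]

theorem card_boundaryLengths_le (N : ℕ) : (boundaryLengths N).card ≤ N := by
  have hsub : boundaryLengths N ⊆ Finset.Icc 1 N := fun m hm => by
    obtain ⟨hmN, -, hm₂⟩ := mem_boundaryLengths.1 hm
    exact Finset.mem_Icc.2 ⟨by omega, hmN⟩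
  simpa using Finset.card_le_card hsub

theorem two_le_of_mem_boundaryLengths {N m : ℕ} (hm : m ∈ boundaryLengths N) : 2 ≤ m :=
  (mem_boundaryLengths.1 hm).2.2

theorem exists_eq_add_two_mul_of_mem_boundaryLengths {N m : ℕ} (hN : Even N)
    (hm : m ∈ boundaryLengths N) : ∃ j, N = m + 2 * j := by
  obtain ⟨hmN, hme, -⟩ := mem_boundaryLengths.1 hm
  obtain ⟨j, hj⟩ := (Nat.even_sub hmN).2 (iff_of_true hN hme)
  exact ⟨j, by omega⟩

/-- The contribution of boundary length `m` to the sum in `Z μ N`. -/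
noncomputable def boundaryWeight (μ : ℝ) (N m : ℕ) : ℝ := exp (-μ * m / 2) * C0 N m

theorem boundaryWeight_pos {N m : ℕ} (μ : ℝ) (hN : Even N) (hm : m ∈ boundaryLengths N) :
    0 < boundaryWeight μ N m := by
  have hm₂ := two_le_of_mem_boundaryLengths hm
  obtain ⟨j, rfl⟩ := exists_eq_add_two_mul_of_mem_boundaryLengths hN hm
  exact mul_pos (exp_pos _) (C0_add_two_mul_pos hm₂ j)

theorem abs_log_boundaryWeight_sub_le {N m : ℕ} (μ : ℝ) (hN : Even N)
    (hm : m ∈ boundaryLengths N) :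
    |log (boundaryWeight μ N m) - N * (countRate (m / N) - μ / 2 * (m / N))| ≤
      6 * log (2 * N) + 2 := by
  have hm₂ := two_le_of_mem_boundaryLengths hm
  obtain ⟨j, rfl⟩ := exists_eq_add_two_mul_of_mem_boundaryLengths hN hm
  have hN' : ((m + 2 * j : ℕ) : ℝ) ≠ 0 := by norm_cast; omega
  have hcancel : ((m + 2 * j : ℕ) : ℝ) * (m / (m + 2 * j : ℕ)) = m := mul_div_cancel₀ _ hN'
  rw [boundaryWeight, log_mul (exp_ne_zero _) (C0_add_two_mul_pos hm₂ j).ne', log_exp, mul_sub,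
    mul_left_comm, hcancel]
  convert abs_log_C0_sub_le hm₂ j using 2
  ring

theorem one_div_mul_log_Z {N : ℕ} (μ : ℝ) (hN : Even N) (hN₂ : 2 ≤ N) :
    1 / (N : ℝ) * log (Z μ N) =
      -(3 / 2) * μ + log (∑ m ∈ boundaryLengths N, boundaryWeight μ N m) / N := by
  have hN' : (N : ℝ) ≠ 0 := by norm_cast; omega
  have hsum : 0 < ∑ m ∈ boundaryLengths N, boundaryWeight μ N m :=
    Finset.sum_pos (fun m hm => boundaryWeight_pos μ hN hm)
      ⟨N, mem_boundaryLengths.2 ⟨le_rfl, hN, hN₂⟩⟩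
  have hZ : Z μ N = exp (-3 * μ * N / 2) * ∑ m ∈ boundaryLengths N, boundaryWeight μ N m := rfl
  rw [hZ, log_mul (exp_ne_zero _) hsum.ne', log_exp]
  field_simp

theorem evenAtTop_le_atTop : evenAtTop ≤ atTop := inf_le_left

theorem eventually_even_evenAtTop : ∀ᶠ N in evenAtTop, Even N :=
  mem_inf_of_right (mem_principal_self _)

theorem tendsto_two_mul_floor_div {β : ℝ} (hβ : 0 ≤ β) :
    Tendsto (fun N : ℕ => ((2 * ⌊β / 2 * N⌋₊ : ℕ) : ℝ) / N) atTop (𝓝 β) := by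
  have hfloor := ((tendsto_nat_floor_mul_div_atTop (div_nonneg hβ zero_le_two)).comp
    (tendsto_natCast_atTop_atTop (R := ℝ))).const_mul 2
  rw [mul_div_cancel₀ β two_ne_zero] at hfloor
  refine hfloor.congr fun N => ?_
  simp only [Function.comp_apply, Nat.cast_mul, Nat.cast_ofNat, mul_div_assoc]

theorem eventually_two_mul_floor_mem_boundaryLengths {β : ℝ} (hβ : β ∈ Set.Ioc 0 1) :
    ∀ᶠ N : ℕ in atTop, 2 * ⌊β / 2 * N⌋₊ ∈ boundaryLengths N := by
  have hlarge : ∀ᶠ N : ℕ in atTop, 1 ≤ β / 2 * N :=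
    (tendsto_natCast_atTop_atTop.const_mul_atTop (half_pos hβ.1)).eventually_ge_atTop 1
  filter_upwards [hlarge] with N hN
  have hfloor_pos : 1 ≤ ⌊β / 2 * N⌋₊ := Nat.le_floor (by simpa using hN)
  have hfloor_le : (2 * ⌊β / 2 * N⌋₊ : ℝ) ≤ N := by
    have hfloor := Nat.floor_le (zero_le_one.trans hN)
    have hβN := mul_le_of_le_one_left N.cast_nonneg hβ.2
    linarith
  exact mem_boundaryLengths.2 ⟨by exact_mod_cast hfloor_le, even_two_mul _, by omega⟩

theorem tendsto_log_sum_boundaryWeight_div {μ β₀ : ℝ} (hβ₀ : β₀ ∈ Set.Ioo 0 1)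
    (hsol : 6 * h β₀ * exp (-μ) = 1) :
    Tendsto (fun N : ℕ => log (∑ m ∈ boundaryLengths N, boundaryWeight μ N m) / N) evenAtTop
      (𝓝 (countRate β₀ - μ / 2 * β₀)) := by
  have hle := evenAtTop_le_atTop
  have hpos : ∀ᶠ N : ℕ in evenAtTop, 0 < N := hle (eventually_gt_atTop 0)
  have herror : (fun N : ℕ => 6 * log (2 * N) + 2) =o[atTop] fun N : ℕ => (N : ℝ) :=
    ((isLittleO_log_const_mul_natCast two_pos).const_mul_left 6).add
      ((isLittleO_const_id_atTop 2).comp_tendsto tendsto_natCast_atTop_atTop)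
  have hrate : Continuous fun β => countRate β - μ / 2 * β :=
    continuous_countRate.sub (continuous_const.mul continuous_id)
  refine tendsto_log_sum_div (k := fun N : ℕ => 2 * ⌊β₀ / 2 * N⌋₊)
    (r := fun N m : ℕ => countRate (m / N) - μ / 2 * (m / N)) ?_ (herror.mono hle) ?_ ?_ ?_ ?_
    (hle (eventually_two_mul_floor_mem_boundaryLengths ⟨hβ₀.1, hβ₀.2.le⟩))
    ((hrate.tendsto β₀).comp ((tendsto_two_mul_floor_div hβ₀.1.le).mono_left hle))
  · filter_upwards [hpos] with N hN
    exact_mod_cast hN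
  · filter_upwards [hpos] with N hN
    have hcard := log_natCast_le_log_natCast (card_boundaryLengths_le N)
    have hlog : 0 ≤ log N := log_natCast_nonneg N
    have hlog_two : 0 ≤ log 2 := log_nonneg one_le_two
    rw [log_mul two_ne_zero (by positivity)]
    linarith
  · filter_upwards [eventually_even_evenAtTop] with N hN m hm
    exact boundaryWeight_pos μ hN hm
  · filter_upwards [eventually_even_evenAtTop] with N hN m hm
    exact abs_log_boundaryWeight_sub_le μ hN hm
  · refine Eventually.of_forall fun N m hm => countRate_sub_le ⟨by linarith [hβ₀.1], hβ₀.2⟩ hsol ?_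
    have hmN : (m : ℝ) ≤ N := by exact_mod_cast (mem_boundaryLengths.1 hm).1
    exact ⟨by linarith [show (0 : ℝ) ≤ m / N by positivity], div_le_one_of_le₀ hmN N.cast_nonneg⟩

end PartitionFunction

/-- Free energy in the elongated (supercritical) region μ₁ < log 6, in terms of the
unique solution β₀ of 6 h(β₀) exp(-μ₁) = 1. -/
theorem free_energy_elongated (μ₁ : ℝ) (hμ : μ₁ < Real.log 6)
    (β₀ : ℝ) (hβ₀ : β₀ ∈ Set.Ioo (0 : ℝ) 1) (hsol : 6 * h β₀ * Real.exp (-μ₁) = 1) :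
    Filter.Tendsto (fun N : ℕ => (1 / (N : ℝ)) * Real.log (Z μ₁ N)) evenAtTop
      (nhds (-(3 / 2) * μ₁ + (1 / 2) * Real.log (27 / 2) +
        (β₀ / 2) * (Real.log 6 - μ₁) + (1 / 2) * ∫ β in (0 : ℝ)..β₀, Real.log (h β))) := by
  have hlimit := (tendsto_log_sum_boundaryWeight_div hβ₀ hsol).const_add (-(3 / 2) * μ₁)
  rw [countRate_eq_integral ⟨by linarith [hβ₀.1], hβ₀.2⟩] at hlimit
  have hZ : ∀ᶠ N in evenAtTop, -(3 / 2) * μ₁ +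
      log (∑ m ∈ boundaryLengths N, boundaryWeight μ₁ N m) / N = 1 / (N : ℝ) * log (Z μ₁ N) := by
    filter_upwards [eventually_even_evenAtTop,
      evenAtTop_le_atTop (eventually_ge_atTop 2)] with N hN hN₂
    exact (one_div_mul_log_Z μ₁ hN hN₂).symm
  convert hlimit.congr' hZ using 2
  ring
end

section
/- Tail of the subcritical limit law: if μ₁ > log 6 and p_m = lim_{N→∞, N even} P_{N,μ₁}(m) (m even, m ≥ 2), then the limits satisfy the recursion p_{m+2}/p_m = 6·exp(−μ₁)·(1 − 1/(4m²))/(1 − 1/m), and there exists a constant C ∈ (0,∞) such that p_m / (√m · (6·exp(−μ₁))^{m/2}) → C as m → ∞ along even integers. -/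
open Filter Real MeasureTheory

/-- Weight of boundary length m: w_{μ₁}(N,m) = exp(-μ₁ m/2) C₀(N,m). -/
noncomputable def w (μ₁ : ℝ) (N m : ℕ) : ℝ := Real.exp (-μ₁ * m / 2) * C0 N m

/-- Normalizing constant Θ_N(μ₁) = Σ_{m even, 2 ≤ m ≤ N} w_{μ₁}(N,m). -/
noncomputable def Θ (μ₁ : ℝ) (N : ℕ) : ℝ :=
  ∑ m ∈ (Finset.range (N + 1)).filter (fun m => Even m ∧ 2 ≤ m), w μ₁ N m

/-- Boundary-length distribution P_{N,μ₁}(m) = w_{μ₁}(N,m)/Θ_N(μ₁). -/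
noncomputable def P (μ₁ : ℝ) (N m : ℕ) : ℝ := w μ₁ N m / Θ μ₁ N

/-!
The ratio `P_N(m + 2) / P_N(m)` equals `6 exp(-μ₁) (1 - 1/(4m²)) / (1 - 1/m)` times a rational
function of `N` and `m` that is at most `1` and tends to `1` as `N → ∞`. The limit gives the
recursion for `p`. The bound dominates `P_N(2(k + 1)) / P_N(2)`, uniformly in `N`, by a sequence
that is summable for `6 exp(-μ₁) < 1`; as the `P_N(m)` sum to `1`, the mass `P_N(2)` stays away
from `0`, so `p 2 > 0`. For `m = 2(i + 1)` the limiting ratio factors as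
`(3/4 + i)(5/4 + i) / ((1/2 + i)(1 + i))`, so Euler's product for the Gamma function shows that
the product of the first `k` of these ratios is asymptotic to a constant times `√k`.
-/

open Finset Topology

/-! ### Euler products -/

lemma tendsto_add_natCast_div_add_natCast (a b : ℝ) :
    Tendsto (fun n : ℕ => (a + n) / (b + n)) atTop (𝓝 1) := by
  simpa using tendsto_add_mul_div_add_mul_atTop_nhds a b 1 one_ne_zero

lemma tendsto_prod_add_div_add_div_rpow {a : ℝ} (ha : ∀ m : ℕ, a ≠ -m) (b : ℝ) :
    Tendsto (fun n : ℕ => (∏ i ∈ range (n + 1), (a + i) / (b + i)) / (n : ℝ) ^ (a - b)) atTop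
      (𝓝 (Gamma b / Gamma a)) := by
  refine ((GammaSeq_tendsto_Gamma b).div (GammaSeq_tendsto_Gamma a) (Gamma_ne_zero ha)).congr' ?_
  filter_upwards [eventually_gt_atTop 0] with n hn
  have hn' : (0 : ℝ) < n := by exact_mod_cast hn
  have hfact : (n.factorial : ℝ) ≠ 0 := by positivity
  have hpow : (n : ℝ) ^ a ≠ 0 := by positivity
  simp only [Pi.div_apply, GammaSeq, prod_div_distrib, rpow_sub hn']
  field_simp

/-! ### Limiting ratios -/

/-- For `2 ≤ m`, the limit of `C0 N (m + 2) / C0 N m` as `N → ∞` with the parity of `m`,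
divided by `6` so that it tends to `1` as `m → ∞`. -/
noncomputable def boundaryRatio (m : ℝ) : ℝ := (1 - 1 / (4 * m ^ 2)) / (1 - 1 / m)

lemma boundaryRatio_pos {m : ℝ} (hm : 1 < m) : 0 < boundaryRatio m := by
  have hnum : 1 / (4 * m ^ 2) < 1 := by rw [div_lt_one (by positivity)]; nlinarith
  have hden : 1 / m < 1 := by rwa [div_lt_one (by positivity)]
  exact div_pos (sub_pos.2 hnum) (sub_pos.2 hden)

lemma boundaryRatio_two_mul_succ (i : ℕ) :
    boundaryRatio ((2 * (i + 1) : ℕ) : ℝ) =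
      (3 / 4 + i) / (1 / 2 + i) * ((5 / 4 + i) / (1 + i)) := by
  have hden : 1 - 1 / ((2 * (i + 1) : ℕ) : ℝ) = (2 * i + 1) / (2 * (i + 1)) := by
    push_cast; field_simp; ring
  rw [boundaryRatio, hden]
  push_cast
  field_simp
  ring

lemma boundaryRatio_two_mul_succ_pos (k : ℕ) :
    0 < boundaryRatio ((2 * (k + 1) : ℕ) : ℝ) :=
  boundaryRatio_pos (by exact_mod_cast (by lia : 1 < 2 * (k + 1)))

lemma tendsto_boundaryRatio_two_mul_succ :
    Tendsto (fun k : ℕ => boundaryRatio ((2 * (k + 1) : ℕ) : ℝ)) atTop (𝓝 1) := by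
  have hmul := (tendsto_add_natCast_div_add_natCast (3 / 4) (1 / 2)).mul
    (tendsto_add_natCast_div_add_natCast (5 / 4) 1)
  rw [mul_one] at hmul
  exact hmul.congr fun k => (boundaryRatio_two_mul_succ k).symm

lemma tendsto_prod_boundaryRatio_div_sqrt :
    Tendsto (fun k : ℕ =>
        (∏ i ∈ range (k + 1), boundaryRatio ((2 * (i + 1) : ℕ) : ℝ)) / √k) atTop
      (𝓝 (Gamma (1 / 2) / Gamma (3 / 4) * (Gamma 1 / Gamma (5 / 4)))) := by
  have hne {a : ℝ} (ha : 0 < a) (m : ℕ) : a ≠ -m := by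
    linarith [m.cast_nonneg (α := ℝ)]
  refine ((tendsto_prod_add_div_add_div_rpow (hne (by norm_num)) (1 / 2)).mul
    (tendsto_prod_add_div_add_div_rpow (hne (by norm_num)) 1)).congr fun k => ?_
  have hsqrt : (k : ℝ) ^ (3 / 4 - 1 / 2 : ℝ) * (k : ℝ) ^ (5 / 4 - 1 : ℝ) = √k := by
    rw [sqrt_eq_rpow, ← rpow_add_of_nonneg k.cast_nonneg (by norm_num) (by norm_num)]
    norm_num
  rw [div_mul_div_comm, hsqrt, ← prod_mul_distrib]
  simp only [boundaryRatio_two_mul_succ]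

lemma exists_tendsto_prod_boundaryRatio_div_sqrt_add_one :
    ∃ K : ℝ, 0 < K ∧
      Tendsto (fun k : ℕ => (∏ i ∈ range k, boundaryRatio ((2 * (i + 1) : ℕ) : ℝ)) / √(k + 1))
        atTop (𝓝 K) := by
  refine ⟨Gamma (1 / 2) / Gamma (3 / 4) * (Gamma 1 / Gamma (5 / 4)), ?_,
    (tendsto_add_atTop_iff_nat 1).1 ?_⟩
  · positivity
  have hsqrt : Tendsto (fun k : ℕ => √((k : ℝ) / (k + 2))) atTop (𝓝 1) := by
    simpa using (tendsto_natCast_div_add_atTop (2 : ℝ)).sqrt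
  have hmul := tendsto_prod_boundaryRatio_div_sqrt.mul hsqrt
  rw [mul_one] at hmul
  refine hmul.congr' ?_
  filter_upwards [eventually_gt_atTop 0] with k hk
  have hk' : √(k : ℝ) ≠ 0 := by positivity
  rw [sqrt_div k.cast_nonneg, div_mul_div_cancel₀ hk']
  push_cast
  ring_nf

/-! ### Ratios of the enumeration numbers -/

/-- The factor by which `C0 N (m + 2) / C0 N m` differs from its limit `6 * boundaryRatio m`
as `N → ∞`. -/
noncomputable def volumeCorrection (N m : ℝ) : ℝ :=
  (N + m / 3) * (N - m + 2) / ((N + m + 1) * (N + m + 2))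

lemma volumeCorrection_le_one {N m : ℝ} (hm : 0 ≤ m) (hmN : m ≤ N) :
    volumeCorrection N m ≤ 1 := by
  have hN : 0 ≤ N := hm.trans hmN
  rw [volumeCorrection, div_le_one (by positivity)]
  exact mul_le_mul (by linarith) (by linarith) (by linarith) (by positivity)

lemma tendsto_volumeCorrection (m : ℝ) :
    Tendsto (fun N : ℕ => volumeCorrection N m) atTop (𝓝 1) := by
  have hmul := (tendsto_add_natCast_div_add_natCast (m / 3) (m + 1)).mul
    (tendsto_add_natCast_div_add_natCast (2 - m) (m + 2))
  rw [mul_one] at hmul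
  refine hmul.congr fun N => ?_
  rw [volumeCorrection, div_mul_div_comm]
  ring_nf

lemma C0_pos (N m : ℕ) : 0 < C0 N m := by
  unfold C0
  positivity

lemma C0_eq_factorial (s j : ℕ) :
    C0 (s + 2 + 2 * j) (s + 2) =
      2 ^ (j + 2) * (2 * s + 3 * j + 3).factorial * (2 * s + 1).factorial /
        ((j + 1).factorial * (2 * s + 2 * j + 4).factorial * (s.factorial : ℝ) ^ 2) := by
  rw [C0, show (s + 2 + 2 * j - (s + 2)) / 2 = j by lia,
    show 2 * (s + 2) + 3 * j - 1 = 2 * s + 3 * j + 3 by lia,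
    show 2 * (s + 2) - 3 = 2 * s + 1 by lia,
    show 2 * (s + 2) + 2 * j = 2 * s + 2 * j + 4 by lia, Nat.add_sub_cancel]

lemma C0_add_two {N m : ℕ} (hm : 2 ≤ m) (hmN : m + 2 ≤ N) (hparity : Even (N - m)) :
    C0 N (m + 2) = 6 * volumeCorrection N m * boundaryRatio m * C0 N m := by
  obtain ⟨s, rfl⟩ : ∃ s, m = s + 2 := ⟨m - 2, by lia⟩
  obtain ⟨j, rfl⟩ : ∃ j, N = s + 2 + 2 + 2 * j := by
    obtain ⟨i, hi⟩ := hparity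
    exact ⟨i - 1, by lia⟩
  have hden : 1 - 1 / ((s : ℝ) + 2) = (s + 1) / (s + 2) := by field_simp; ring
  rw [C0_eq_factorial (s + 2) j, show s + 2 + 2 + 2 * j = s + 2 + 2 * (j + 1) by ring,
    C0_eq_factorial s (j + 1),
    show 2 * (s + 2) + 3 * j + 3 = 2 * s + 3 * (j + 1) + 3 + 1 by ring,
    show 2 * (s + 2) + 2 * j + 4 = 2 * s + 2 * (j + 1) + 4 + 1 + 1 by ring,
    show 2 * (s + 2) + 1 = 2 * s + 1 + 1 + 1 + 1 + 1 by ring]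
  simp only [volumeCorrection, boundaryRatio, Nat.factorial_succ]
  push_cast
  rw [hden]
  field_simp
  ring

/-! ### The boundary-length distribution -/

section Distribution

variable {μ : ℝ} {N m : ℕ}

lemma w_pos (μ : ℝ) (N m : ℕ) : 0 < w μ N m :=
  mul_pos (exp_pos _) (C0_pos N m)

lemma w_add_two (hm : 2 ≤ m) (hmN : m + 2 ≤ N) (hparity : Even (N - m)) :
    w μ N (m + 2) = volumeCorrection N m * (6 * exp (-μ) * boundaryRatio m) * w μ N m := by
  have hexp : exp (-μ * (m + 2 : ℕ) / 2) = exp (-μ) * exp (-μ * m / 2) := by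
    rw [← exp_add]
    push_cast
    ring_nf
  rw [w, w, hexp, C0_add_two hm hmN hparity]
  ring

lemma Θ_eq_sum_range (μ : ℝ) (N : ℕ) :
    Θ μ N = ∑ k ∈ range (N / 2), w μ N (2 * (k + 1)) := by
  refine sum_nbij' (fun m => m / 2 - 1) (fun k => 2 * (k + 1)) ?_ ?_ ?_ ?_ ?_ <;>
    simp only [mem_filter, mem_range, Nat.even_iff]
  · lia
  · lia
  · lia
  · lia
  · intro m hm
    rw [show 2 * (m / 2 - 1 + 1) = m by lia]

lemma Θ_pos (hN : 2 ≤ N) : 0 < Θ μ N := by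
  rw [Θ_eq_sum_range]
  exact sum_pos (fun _ _ => w_pos _ _ _) (nonempty_range_iff.2 (by lia))

lemma P_nonneg (μ : ℝ) (N m : ℕ) : 0 ≤ P μ N m :=
  div_nonneg (w_pos _ _ _).le (sum_nonneg fun _ _ => (w_pos _ _ _).le)

lemma sum_P_eq_one (hN : 2 ≤ N) : ∑ k ∈ range (N / 2), P μ N (2 * (k + 1)) = 1 := by
  simp only [P]
  rw [← sum_div, ← Θ_eq_sum_range, div_self (Θ_pos hN).ne']

lemma P_add_two (hm : 2 ≤ m) (hmN : m + 2 ≤ N) (hparity : Even (N - m)) :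
    P μ N (m + 2) = volumeCorrection N m * (6 * exp (-μ) * boundaryRatio m) * P μ N m := by
  rw [P, P, w_add_two hm hmN hparity, mul_div_assoc]

end Distribution

/-! ### The limiting profile -/

/-- The unnormalised limit law at boundary length `2 * (k + 1)`, with value `1` at `k = 0`, where
`x` stands for `6 * exp (-μ₁)`. -/
noncomputable def limitProfile (x : ℝ) (k : ℕ) : ℝ :=
  x ^ k * ∏ i ∈ range k, boundaryRatio ((2 * (i + 1) : ℕ) : ℝ)

section LimitProfile

variable {x : ℝ}

lemma limitProfile_zero (x : ℝ) : limitProfile x 0 = 1 := by simp [limitProfile]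

lemma limitProfile_succ (x : ℝ) (k : ℕ) :
    limitProfile x (k + 1) =
      x * boundaryRatio ((2 * (k + 1) : ℕ) : ℝ) * limitProfile x k := by
  rw [limitProfile, limitProfile, prod_range_succ, pow_succ]
  ring

lemma limitProfile_pos (hx : 0 < x) (k : ℕ) : 0 < limitProfile x k :=
  mul_pos (pow_pos hx k) (prod_pos fun i _ => boundaryRatio_two_mul_succ_pos i)

lemma summable_limitProfile (hx₀ : 0 < x) (hx₁ : x < 1) : Summable (limitProfile x) := by
  refine summable_of_ratio_test_tendsto_lt_one hx₁
    (.of_forall fun k => (limitProfile_pos hx₀ k).ne') ?_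
  have hlim := tendsto_boundaryRatio_two_mul_succ.const_mul x
  rw [mul_one] at hlim
  refine hlim.congr fun k => ?_
  rw [norm_of_nonneg (limitProfile_pos hx₀ _).le, norm_of_nonneg (limitProfile_pos hx₀ _).le,
    limitProfile_succ, mul_div_cancel_right₀ _ (limitProfile_pos hx₀ k).ne']

lemma eq_limitProfile_mul {p : ℕ → ℝ}
    (hp : ∀ m, Even m → 2 ≤ m → p (m + 2) = x * boundaryRatio m * p m) (k : ℕ) :
    p (2 * (k + 1)) = limitProfile x k * p 2 := by
  induction k with
  | zero => simp [limitProfile_zero]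
  | succ k ih =>
    rw [mul_add_one, hp _ (even_two_mul _) (by lia), ih, limitProfile_succ, ← mul_assoc]

lemma exists_tendsto_limitProfile_div (hx : 0 < x) :
    ∃ C : ℝ, 0 < C ∧
      Tendsto (fun k : ℕ => limitProfile x k / (√((2 * (k + 1) : ℕ) : ℝ) * x ^ (k + 1))) atTop
        (𝓝 C) := by
  obtain ⟨K, hK, hlim⟩ := exists_tendsto_prod_boundaryRatio_div_sqrt_add_one
  refine ⟨(√2 * x)⁻¹ * K, by positivity, (hlim.const_mul _).congr fun k => ?_⟩
  rw [limitProfile]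
  push_cast
  rw [sqrt_mul zero_le_two, pow_succ]
  field_simp

end LimitProfile

/-! ### The limit law -/

section LimitLaw

variable {μ : ℝ}

lemma P_le_limitProfile_mul_P_two {N : ℕ} (hN : Even N) {k : ℕ} (hk : 2 * (k + 1) ≤ N) :
    P μ N (2 * (k + 1)) ≤ limitProfile (6 * exp (-μ)) k * P μ N 2 := by
  induction k with
  | zero => simp [limitProfile_zero]
  | succ k ih =>
    have hratio : 0 ≤ 6 * exp (-μ) * boundaryRatio ((2 * (k + 1) : ℕ) : ℝ) :=
      mul_nonneg (by positivity) (boundaryRatio_two_mul_succ_pos k).le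
    have hparity : Even (N - 2 * (k + 1)) := hN.tsub (even_two_mul _)
    have hcorr : volumeCorrection N (2 * (k + 1) : ℕ) ≤ 1 :=
      volumeCorrection_le_one (Nat.cast_nonneg _) (by exact_mod_cast (by lia))
    calc P μ N (2 * (k + 1) + 2)
        = volumeCorrection N (2 * (k + 1) : ℕ) *
            (6 * exp (-μ) * boundaryRatio ((2 * (k + 1) : ℕ) : ℝ)) * P μ N (2 * (k + 1)) :=
          P_add_two (by lia) hk hparity
      _ ≤ 1 * (6 * exp (-μ) * boundaryRatio ((2 * (k + 1) : ℕ) : ℝ)) *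
            (limitProfile (6 * exp (-μ)) k * P μ N 2) := by
          gcongr
          · exact P_nonneg _ _ _
          · exact ih (by lia)
      _ = limitProfile (6 * exp (-μ)) (k + 1) * P μ N 2 := by
          rw [limitProfile_succ]
          ring

lemma six_mul_exp_neg_lt_one (hμ : log 6 < μ) : 6 * exp (-μ) < 1 := by
  rw [exp_neg, ← div_eq_mul_inv, div_lt_one (exp_pos _)]
  exact (log_lt_iff_lt_exp (by norm_num)).1 hμ

lemma one_le_tsum_limitProfile_mul_P_two (hμ : log 6 < μ) {N : ℕ} (hN : Even N)
    (hN₂ : 2 ≤ N) : 1 ≤ (∑' k, limitProfile (6 * exp (-μ)) k) * P μ N 2 := by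
  have hx : 0 < 6 * exp (-μ) := by positivity
  calc 1 = ∑ k ∈ range (N / 2), P μ N (2 * (k + 1)) := (sum_P_eq_one hN₂).symm
    _ ≤ ∑ k ∈ range (N / 2), limitProfile (6 * exp (-μ)) k * P μ N 2 :=
      sum_le_sum fun k hk => P_le_limitProfile_mul_P_two hN (by rw [mem_range] at hk; lia)
    _ = (∑ k ∈ range (N / 2), limitProfile (6 * exp (-μ)) k) * P μ N 2 := (sum_mul ..).symm
    _ ≤ (∑' k, limitProfile (6 * exp (-μ)) k) * P μ N 2 :=
      mul_le_mul_of_nonneg_right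
        ((summable_limitProfile hx (six_mul_exp_neg_lt_one hμ)).sum_le_tsum _
          fun k _ => (limitProfile_pos hx k).le)
        (P_nonneg _ _ _)

lemma eventually_evenAtTop_even_and_ge (n : ℕ) : ∀ᶠ N in evenAtTop, Even N ∧ n ≤ N :=
  Eventually.and (mem_inf_of_right (mem_principal_self _))
    (mem_inf_of_left (eventually_ge_atTop n))

instance neBot_evenAtTop : evenAtTop.NeBot :=
  inf_principal_neBot_iff.2 fun _ hs =>
    let ⟨n, hn⟩ := mem_atTop_sets.1 hs
    ⟨2 * n, hn _ (by lia), even_two_mul n⟩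

lemma limit_P_two_pos (hμ : log 6 < μ) {a : ℝ}
    (ha : Tendsto (fun N => P μ N 2) evenAtTop (𝓝 a)) : 0 < a := by
  have hge : 1 ≤ (∑' k, limitProfile (6 * exp (-μ)) k) * a :=
    ge_of_tendsto (ha.const_mul _) <| (eventually_evenAtTop_even_and_ge 2).mono
      fun N hN => one_le_tsum_limitProfile_mul_P_two hμ hN.1 hN.2
  have hsum : 0 ≤ ∑' k, limitProfile (6 * exp (-μ)) k :=
    tsum_nonneg fun k => (limitProfile_pos (by positivity) k).le
  exact pos_of_mul_pos_right (one_pos.trans_le hge) hsum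

lemma limit_P_add_two {m : ℕ} (hm : Even m) (hm₂ : 2 ≤ m) {a b : ℝ}
    (ha : Tendsto (fun N => P μ N m) evenAtTop (𝓝 a))
    (hb : Tendsto (fun N => P μ N (m + 2)) evenAtTop (𝓝 b)) :
    b = 6 * exp (-μ) * boundaryRatio m * a := by
  have hlim := (((tendsto_volumeCorrection m).mono_left
    (inf_le_left : evenAtTop ≤ atTop)).mul_const (6 * exp (-μ) * boundaryRatio m)).mul ha
  rw [one_mul] at hlim
  refine tendsto_nhds_unique hb (hlim.congr' ?_)
  filter_upwards [eventually_evenAtTop_even_and_ge (m + 2)] with N hN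
  exact (P_add_two hm₂ hN.2 (hN.1.tsub hm)).symm

end LimitLaw

/-- Tail of the subcritical limit law: the limits p_m satisfy the explicit recursion and
p_m ~ C √m (6 exp(-μ₁))^{m/2} as m → ∞ along even integers. -/
theorem subcritical_tail (μ₁ : ℝ) (hμ : Real.log 6 < μ₁) (p : ℕ → ℝ)
    (hp : ∀ m : ℕ, Even m → 2 ≤ m →
      Filter.Tendsto (fun N : ℕ => P μ₁ N m) evenAtTop (nhds (p m))) :
    (∀ m : ℕ, Even m → 2 ≤ m →
      p (m + 2) / p m =
        6 * Real.exp (-μ₁) * ((1 - 1 / (4 * (m : ℝ) ^ 2)) / (1 - 1 / (m : ℝ)))) ∧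
    ∃ C : ℝ, 0 < C ∧
      Filter.Tendsto
        (fun k : ℕ => p (2 * (k + 1)) /
          (Real.sqrt ((2 * (k + 1) : ℕ) : ℝ) * (6 * Real.exp (-μ₁)) ^ (k + 1)))
        Filter.atTop (nhds C) := by
  have hx : 0 < 6 * exp (-μ₁) := by positivity
  have hp₂ : 0 < p 2 := limit_P_two_pos hμ (hp 2 even_two le_rfl)
  have hrec : ∀ m, Even m → 2 ≤ m → p (m + 2) = 6 * exp (-μ₁) * boundaryRatio m * p m :=
    fun m hm hm₂ => limit_P_add_two hm hm₂ (hp m hm hm₂) (hp _ (hm.add even_two) (by lia))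
  have hprofile := eq_limitProfile_mul hrec
  refine ⟨fun m hm hm₂ => ?_, ?_⟩
  · obtain ⟨k, rfl⟩ : ∃ k, m = 2 * (k + 1) := by
      obtain ⟨i, rfl⟩ := hm
      exact ⟨i - 1, by lia⟩
    have hpos : 0 < p (2 * (k + 1)) := by
      rw [hprofile]
      exact mul_pos (limitProfile_pos hx k) hp₂
    rw [hrec _ hm hm₂, mul_div_cancel_right₀ _ hpos.ne', boundaryRatio]
  · obtain ⟨C, hC, hlim⟩ := exists_tendsto_limitProfile_div hx
    refine ⟨p 2 * C, mul_pos hp₂ hC, (hlim.const_mul (p 2)).congr fun k => ?_⟩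
    rw [hprofile, mul_comm (limitProfile _ k), mul_div_assoc]
end
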